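/- For every integer d ≥ 2 there exists M = M(d) such that every (d+1)-crossing polygonal path π = p_1p_2⋯p_n in general position in R^d can be subdivided into at most M convex polygonal paths; that is, there are indices 1 = i_0 < i_1 < ⋯ < i_k = n with k ≤ M such that each polygonal path p_{i_{j-1}}p_{i_{j-1}+1}⋯p_{i_j} is d-crossing. -/

import Mathlib

open Set

/-- `h` is an (affine) hyperplane in `ℝ^d`: the solution set of a nontrivial
linear equation `∑ i, u i * x i = c`. -/
def IsHyperplane {d : ℕ} (h : Set (Fin d → ℝ)) : Prop :=
  ∃ (u : Fin d → ℝ) (c : ℝ), u ≠ 0 ∧ h = {x | ∑ i, u i * x i = c}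

/-- A curve `γ` is `k`-crossing on the interval `I` if for every hyperplane `h`
the set `{t ∈ I : γ t ∈ h}` has at most `k` elements. -/
def CurveCrossing {d : ℕ} (k : ℕ) (I : Set ℝ) (γ : ℝ → (Fin d → ℝ)) : Prop :=
  ∀ h : Set (Fin d → ℝ), IsHyperplane h → {t | t ∈ I ∧ γ t ∈ h}.encard ≤ (k : ℕ∞)

/-- The polygonal path `p 0 p 1 ⋯ p (n-1)`, as a subset of `ℝ^d`
(the union of its edges). -/
def PathSet {d n : ℕ} (p : Fin n → (Fin d → ℝ)) : Set (Fin d → ℝ) :=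
  ⋃ (i : Fin n) (h : (i : ℕ) + 1 < n), segment ℝ (p i) (p ⟨(i : ℕ) + 1, h⟩)

/-- A polygonal path is `k`-crossing if every hyperplane containing no edge of the
path intersects the path in at most `k` points. -/
def PathCrossing {d n : ℕ} (k : ℕ) (p : Fin n → (Fin d → ℝ)) : Prop :=
  ∀ h : Set (Fin d → ℝ), IsHyperplane h →
    (∀ (i : Fin n) (hi : (i : ℕ) + 1 < n), ¬ segment ℝ (p i) (p ⟨(i : ℕ) + 1, hi⟩) ⊆ h) →
    (PathSet p ∩ h).encard ≤ (k : ℕ∞)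

/-- A point sequence in `ℝ^d` is in general position if every at most `d+1` of the
points are affinely independent. -/
def GeneralPosition {d n : ℕ} (p : Fin n → (Fin d → ℝ)) : Prop :=
  ∀ s : Finset (Fin n), s.card ≤ d + 1 → AffineIndependent ℝ (fun i : s => p i)

/-- The sign (orientation) of an ordered `(d+1)`-tuple of points of `ℝ^d`: the sign of
the determinant of the `(d+1) × (d+1)` matrix whose `j`-th column is `(1, q j)`. -/
noncomputable def otSign {d : ℕ} (q : Fin (d + 1) → (Fin d → ℝ)) : ℝ :=
  Real.sign (Matrix.det (Matrix.of fun i j : Fin (d + 1) =>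
    (Fin.cons (1 : ℝ) (q j) : Fin (d + 1) → ℝ) i))

/-- A point sequence is order-type homogeneous if all of its increasing-index
`(d+1)`-tuples have the same nonzero sign. -/
def OrderTypeHomogeneous {d n : ℕ} (p : Fin n → (Fin d → ℝ)) : Prop :=
  ∃ σ : ℝ, σ ≠ 0 ∧ ∀ f : Fin (d + 1) → Fin n, StrictMono f →
    otSign (fun j => p (f j)) = σ

/-- The sign of a `(d+1)`-element subset of the index set of a point sequence:
the sign of the corresponding increasing-index `(d+1)`-tuple (junk value `0` if the
set does not have `d+1` elements). -/
noncomputable def finsetSign {d n : ℕ} (p : Fin n → (Fin d → ℝ)) (s : Finset (Fin n)) : ℝ :=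
  if h : s.card = d + 1 then otSign (fun j => p ((s.orderIsoOfFin h) j : Fin n)) else 0

/-- A point sequence in `ℝ^d` is in super-general position if for each `1 ≤ k ≤ d` its
projection to the first `k` coordinates is in general position. -/
def SuperGeneralPosition {d n : ℕ} (p : Fin n → (Fin d → ℝ)) : Prop :=
  ∀ (k : ℕ), 1 ≤ k → ∀ (hk : k ≤ d),
    GeneralPosition (fun i => fun j : Fin k => p i (Fin.castLE hk j))

/-- A point sequence in `ℝ^d` is super-order-type homogeneous if for each `1 ≤ k ≤ d` its
projection to the first `k` coordinates is order-type homogeneous. -/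
def SuperOrderTypeHomogeneous {d n : ℕ} (p : Fin n → (Fin d → ℝ)) : Prop :=
  ∀ (k : ℕ), 1 ≤ k → ∀ (hk : k ≤ d),
    OrderTypeHomogeneous (fun i => fun j : Fin k => p i (Fin.castLE hk j))

/-- `OTNum d n` is the smallest `N` such that every sequence of `N` points in general
position in `ℝ^d` contains an order-type homogeneous subsequence of length `n`. -/
noncomputable def OTNum (d n : ℕ) : ℕ :=
  sInf {N : ℕ | ∀ p : Fin N → (Fin d → ℝ), GeneralPosition p →
    ∃ f : Fin n → Fin N, StrictMono f ∧ OrderTypeHomogeneous (fun i => p (f i))}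

/-- `COTNum d n` is the smallest `N` such that every sequence of `N` points in
super-general position in `ℝ^d` contains a super-order-type homogeneous subsequence
of length `n`. -/
noncomputable def COTNum (d n : ℕ) : ℕ :=
  sInf {N : ℕ | ∀ p : Fin N → (Fin d → ℝ), SuperGeneralPosition p →
    ∃ f : Fin n → Fin N, StrictMono f ∧ SuperOrderTypeHomogeneous (fun i => p (f i))}

/-- The tower function: `twr 1 x = x` and `twr (i+1) x = 2 ^ twr i x`. -/
def twr (k x : ℕ) : ℕ := (fun y => 2 ^ y)^[k - 1] x

/-- `t` is an `ε`-sample of the interval `[a, b]`: an increasing tuple of points of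
`[a, b]` meeting every subinterval of `[a, b]` of length `ε`. -/
def IsEpsSample (a b ε : ℝ) {n : ℕ} (t : Fin n → ℝ) : Prop :=
  StrictMono t ∧ (∀ i, t i ∈ Set.Icc a b) ∧
    ∀ x : ℝ, Set.Icc x (x + ε) ⊆ Set.Icc a b → ∃ i, t i ∈ Set.Icc x (x + ε)

/-- All `(k+1)`-element subsets of the index interval `[a, b]` have the same sign. -/
def IntervalHomog {n : ℕ} (k : ℕ) (sgn : Finset (Fin n) → Bool) (a b : Fin n) : Prop :=
  ∃ σ : Bool, ∀ s : Finset (Fin n), s.card = k + 1 → (∀ i ∈ s, a ≤ i ∧ i ≤ b) → sgn s = σ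

/-- `c 0 = 0 < c 1 < ⋯ < c m = n - 1` are the cut points of the greedy partition of the
`k`-sequence on `Fin n` with sign function `sgn` into the `m` blocks
`[c 0, c 1], [c 1, c 2], …, [c (m-1), c m]` (consecutive blocks overlap in one point):
each block has all its `(k+1)`-element subsets of the same sign, and each block is
maximal with this property (cannot be extended to the right). -/
def IsGreedyPartition {n : ℕ} (k : ℕ) (sgn : Finset (Fin n) → Bool) (m : ℕ)
    (c : Fin (m + 1) → Fin n) : Prop :=
  (c 0 : ℕ) = 0 ∧ (c (Fin.last m) : ℕ) = n - 1 ∧ StrictMono c ∧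
    (∀ j : Fin m, IntervalHomog k sgn (c j.castSucc) (c j.succ)) ∧
    (∀ j : Fin m, ∀ e : Fin n, c j.succ < e → ¬ IntervalHomog k sgn (c j.castSucc) e)

/-- A `k`-sequence is a flip `k`-sequence if for every `k`-element subset `A` of indices
the sign sequence `(sgn (insert i A) : i ∉ A)` (indices in increasing order) has at most
one sign change; for `±`-valued sequences this says there are no positions `i < j < l`
with `sgn (insert i A) ≠ sgn (insert j A)` and `sgn (insert j A) ≠ sgn (insert l A)`. -/
def FlipSeq {n : ℕ} (k : ℕ) (sgn : Finset (Fin n) → Bool) : Prop :=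
  ∀ A : Finset (Fin n), A.card = k →
    ¬ ∃ i j l : Fin n, i < j ∧ j < l ∧ i ∉ A ∧ j ∉ A ∧ l ∉ A ∧
      sgn (insert i A) ≠ sgn (insert j A) ∧ sgn (insert j A) ≠ sgn (insert l A)

/-!
Color a `(d + 1)`-subset of the indices by the orientation of the corresponding points. If a
`d`-subset `A` had two sign changes, at `i < j < l`, then a small perturbation of the hyperplane
through the points of `A` would have the points indexed by `A` and `i, j, l` alternately on its two
sides, and a generic parallel hyperplane would meet the path in `d + 2` points. So the coloring of a
`(d + 1)`-crossing path has the flip property.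

By induction on `k`, the index set of a flip `k`-sequence splits into boundedly many homogeneous
intervals: the sets containing the last index form a flip `(k - 1)`-sequence, and on each
homogeneous interval of the latter a change of sign can occur only once.

Finally, a block on which all orientations agree is `d`-crossing: points on `d + 1` different edges
are affinely independent, because all terms in the multilinear expansion of their determinant have
the same sign.
-/

theorem of_card_eq_of_exchange {α : Type*} [DecidableEq α] {P : Finset α → Prop} {S T : Finset α}
    (hcard : S.card = T.card) (hS : P S)
    (hexch : ∀ B ⊆ S ∪ T, B.card + 1 = S.card → ∀ x ∈ S \ T, ∀ y ∈ T \ S, x ∉ B → y ∉ B →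
      P (insert x B) → P (insert y B)) :
    P T := by
  induction hm : (S \ T).card generalizing S with
  | zero =>
    have hsub : S ⊆ T := by simpa [Finset.sdiff_eq_empty_iff_subset] using hm
    exact Finset.eq_of_subset_of_card_le hsub hcard.ge ▸ hS
  | succ m ih =>
    obtain ⟨x, hx⟩ : (S \ T).Nonempty := by rw [← Finset.card_pos]; lia
    obtain ⟨y, hy⟩ : (T \ S).Nonempty := by
      rw [← Finset.card_pos, Finset.card_sdiff_comm hcard.symm]; lia
    have hxS := (Finset.mem_sdiff.1 hx).1
    have hyS : y ∉ S.erase x := fun h => (Finset.mem_sdiff.1 hy).2 (Finset.mem_of_mem_erase h)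
    have hcard_erase : (S.erase x).card + 1 = S.card := Finset.card_erase_add_one hxS
    have hcard_new : (insert y (S.erase x)).card = S.card := by
      rw [Finset.card_insert_of_notMem hyS, hcard_erase]
    have hsdiff : insert y (S.erase x) \ T = (S \ T).erase x := by
      rw [Finset.insert_sdiff_of_mem _ (Finset.mem_sdiff.1 hy).1, Finset.erase_sdiff_comm]
    refine ih (hcard_new.trans hcard) ?_ ?_ ?_
    · refine hexch _ (by grind) hcard_erase x hx y hy (Finset.notMem_erase x S) hyS ?_
      rwa [Finset.insert_erase hxS]
    · intro B hB hBcard x' hx' y' hy'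
      exact hexch B (by grind) (hBcard.trans hcard_new) x' (by grind) y' (by grind)
    · rw [hsdiff, Finset.card_erase_of_mem hx, hm, Nat.add_sub_cancel]

section Homogeneity

variable {n k : ℕ} {sgn : Finset (Fin n) → Bool} {a a' b b' : Fin n}

lemma IntervalHomog.mono (h : IntervalHomog k sgn a b) (ha : a ≤ a') (hb : b' ≤ b) :
    IntervalHomog k sgn a' b' := by
  obtain ⟨σ, hσ⟩ := h
  exact ⟨σ, fun s hs hsub => hσ s hs fun i hi =>
    ⟨ha.trans (hsub i hi).1, (hsub i hi).2.trans hb⟩⟩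

lemma intervalHomog_of_card_Icc_le (h : (Finset.Icc a b).card ≤ k + 1) :
    IntervalHomog k sgn a b := by
  refine ⟨sgn (Finset.Icc a b), fun s hs hsub => ?_⟩
  have hs_sub : s ⊆ Finset.Icc a b := fun i hi => Finset.mem_Icc.2 (hsub i hi)
  rw [Finset.eq_of_subset_of_card_le hs_sub (h.trans hs.ge)]

lemma exists_first_not_intervalHomog (k : ℕ) (sgn : Finset (Fin n) → Bool) (a : Fin n) :
    ∃ e, ∀ b, IntervalHomog k sgn a b ∨ (e ≤ b ∧ ¬ IntervalHomog k sgn a e) := by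
  by_cases hall : ∀ b, IntervalHomog k sgn a b
  · exact ⟨a, fun b => Or.inl (hall b)⟩
  · push Not at hall
    obtain ⟨e, he, hmin⟩ := WellFounded.has_min wellFounded_lt {b | ¬ IntervalHomog k sgn a b} hall
    exact ⟨e, fun b => or_iff_not_imp_left.2 fun hb => ⟨not_lt.1 (hmin b hb), he⟩⟩

end Homogeneity

section Flip

variable {n k : ℕ} {a b c e x y z : Fin n}

/-- `C` is a cut set of the `k`-sequence `sgn` if every index interval containing no element of
`C`, except possibly its left end, is homogeneous: the elements of `C` are the left ends of the
blocks of a partition of the indices into homogeneous intervals. -/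
def IsCutSet (k : ℕ) (sgn : Finset (Fin n) → Bool) (C : Finset (Fin n)) : Prop :=
  ∀ a b, Disjoint C (Finset.Ioc a b) → IntervalHomog k sgn a b

lemma FlipSeq.sgn_insert_eq {sgn : Finset (Fin n) → Bool} (hf : FlipSeq k sgn)
    {A : Finset (Fin n)} (hA : A.card = k) (hxy : x < y) (hyz : y < z) (hx : x ∉ A) (hy : y ∉ A)
    (hz : z ∉ A) (h : sgn (insert x A) = sgn (insert z A)) :
    sgn (insert y A) = sgn (insert z A) := by
  by_contra hne
  exact hf A hA ⟨x, y, z, hxy, hyz, hx, hy, hz, fun h' => hne (h'.symm.trans h), hne⟩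

/-- Start from a set of sign `σ` between `c` and `e` and exchange its elements one by one for larger
ones: by the flip property, with `z` as the third index, the sign remains `σ`. -/
lemma FlipSeq.intervalHomog_of_not_intervalHomog {sgn : Finset (Fin n) → Bool}
    (hf : FlipSeq k sgn) (hbz : b < z) (heb : e ≤ b) {σ : Bool}
    (hσ : ∀ B : Finset (Fin n), B.card = k → (∀ i ∈ B, c ≤ i ∧ i ≤ b) → sgn (insert z B) = σ)
    (hne : ¬ IntervalHomog k sgn c e) : IntervalHomog k sgn e b := by
  obtain ⟨S, hScard, hSsub, hSσ⟩ : ∃ S : Finset (Fin n), S.card = k + 1 ∧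
      (∀ i ∈ S, c ≤ i ∧ i ≤ e) ∧ sgn S = σ := by
    by_contra! hS
    exact hne ⟨!σ, fun S hScard hSsub => Bool.eq_not.2 (hS S hScard hSsub)⟩
  have hce : c ≤ e := by
    obtain ⟨i, hi⟩ : S.Nonempty := Finset.card_pos.1 (by lia)
    exact (hSsub i hi).1.trans (hSsub i hi).2
  refine ⟨σ, fun T hTcard hTsub => ?_⟩
  refine of_card_eq_of_exchange (P := fun S => sgn S = σ) (hScard.trans hTcard.symm) hSσ ?_
  intro B hBsub hBcard x hx y hy hxB hyB hxσ
  have hBk : B.card = k := by lia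
  have hB : ∀ i ∈ B, c ≤ i ∧ i ≤ b := by grind
  have hxy : x < y := by grind
  have hyz : y < z := by grind
  have hzB : z ∉ B := fun hz => (hB z hz).2.not_gt hbz
  rw [← hσ B hBk hB] at hxσ ⊢
  exact hf.sgn_insert_eq hBk hxy hyz hxB hyB hzB hxσ

/-- The link of the last index: the sign of `S` is the original sign of `S` together with the last
index. It lowers `k` by one in the induction on flip sequences. -/
def lastLink (sgn : Finset (Fin (n + 1)) → Bool) (S : Finset (Fin n)) : Bool :=
  sgn (insert (Fin.last n) (S.map Fin.castSuccEmb))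

lemma FlipSeq.lastLink {sgn : Finset (Fin (n + 1)) → Bool} (hf : FlipSeq (k + 1) sgn) :
    FlipSeq k (lastLink sgn) := by
  rintro A hA ⟨i, j, l, hij, hjl, hi, hj, hl, hne, hne'⟩
  have hnotMem : ∀ i, i ∉ A → i.castSucc ∉ insert (Fin.last n) (A.map Fin.castSuccEmb) := by
    intro i hi
    simpa [Fin.castSucc_ne_last] using hi
  refine hf (insert (Fin.last n) (A.map Fin.castSuccEmb)) (by simp [hA])
    ⟨i.castSucc, j.castSucc, l.castSucc, hij, hjl, hnotMem i hi, hnotMem j hj, hnotMem l hl, ?_⟩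
  simpa only [_root_.lastLink, Finset.map_insert, Fin.coe_castSuccEmb,
    Finset.insert_comm (Fin.last n)] using And.intro hne hne'

lemma IsCutSet.insert_last_const {sgn : Finset (Fin (n + 1)) → Bool} {C : Finset (Fin n)}
    (hC : IsCutSet k (lastLink sgn) C) {a b : Fin (n + 1)} (hb : b < Fin.last n)
    (hab : Disjoint (C.map Fin.castSuccEmb) (Finset.Ioc a b)) :
    ∃ σ, ∀ B : Finset (Fin (n + 1)), B.card = k + 1 → (∀ i ∈ B, a ≤ i ∧ i ≤ b) →
      sgn (insert (Fin.last n) B) = σ := by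
  rcases lt_or_ge b a with hba | hab'
  · refine ⟨true, fun B hB hBsub => ?_⟩
    obtain ⟨i, hi⟩ : B.Nonempty := Finset.card_pos.1 (by lia)
    exact absurd ((hBsub i hi).1.trans (hBsub i hi).2) hba.not_ge
  obtain ⟨b, rfl⟩ := Fin.exists_castSucc_eq.2 hb.ne
  obtain ⟨a, rfl⟩ := Fin.exists_castSucc_eq.2 (hab'.trans_lt hb).ne
  rw [← Fin.map_castSuccEmb_Ioc, Finset.disjoint_map] at hab
  obtain ⟨σ, hσ⟩ := hC a b hab
  refine ⟨σ, fun B hB hBsub => ?_⟩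
  have hBIcc : B ⊆ (Finset.Icc a b).map Fin.castSuccEmb := by
    intro i hi
    rw [Fin.map_castSuccEmb_Icc]
    exact Finset.mem_Icc.2 (hBsub i hi)
  obtain ⟨B, hB', rfl⟩ := Finset.subset_map_iff.1 hBIcc
  exact hσ B (by simpa using hB) fun i hi => Finset.mem_Icc.1 (hB' hi)

lemma FlipSeq.exists_isCutSet_of_insert_last_const {sgn : Finset (Fin (n + 1)) → Bool}
    (hf : FlipSeq k sgn) (C : Finset (Fin (n + 1)))
    (hC : ∀ a b, b < Fin.last n → Disjoint C (Finset.Ioc a b) →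
      ∃ σ, ∀ B : Finset (Fin (n + 1)), B.card = k → (∀ i ∈ B, a ≤ i ∧ i ≤ b) →
        sgn (insert (Fin.last n) B) = σ) :
    ∃ D : Finset (Fin (n + 1)), D.card ≤ 2 * (C.card + 2) ∧ IsCutSet k sgn D := by
  choose e he using exists_first_not_intervalHomog k sgn
  set C' : Finset (Fin (n + 1)) := C ∪ {0, Fin.last n} with hC'
  have hcard : C'.card ≤ C.card + 2 :=
    (Finset.card_union_le _ _).trans (Nat.add_le_add_left Finset.card_le_two _)
  refine ⟨C' ∪ C'.image e, ?_, fun a b hab => ?_⟩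
  · have h₁ := Finset.card_union_le C' (C'.image e)
    have h₂ := Finset.card_image_le (s := C') (f := e)
    lia
  rw [Finset.disjoint_left] at hab
  obtain ⟨c, hc, hcmax⟩ := (C'.filter (· ≤ a)).exists_max_image id ⟨0, by simp [hC']⟩
  obtain ⟨hcC, hca⟩ := Finset.mem_filter.1 hc
  have hcb : Disjoint C' (Finset.Ioc c b) := by
    refine Finset.disjoint_left.2 fun c' hc' hmem => ?_
    obtain ⟨hcc', hc'b⟩ := Finset.mem_Ioc.1 hmem
    rcases le_or_gt c' a with hc'a | hac'
    · exact (hcmax c' (Finset.mem_filter.2 ⟨hc', hc'a⟩)).not_gt hcc'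
    · exact hab (Finset.mem_union_left _ hc') (Finset.mem_Ioc.2 ⟨hac', hc'b⟩)
  rcases (Fin.le_last b).eq_or_lt with rfl | hb
  · have hlast : Fin.last n ≤ a := by
      by_contra! h
      exact hab (by simp [hC']) (Finset.mem_Ioc.2 ⟨h, le_rfl⟩)
    obtain rfl := (Fin.le_last a).antisymm hlast
    exact intervalHomog_of_card_Icc_le (by simp)
  obtain ⟨σ, hσ⟩ := hC c b hb (hcb.mono_left Finset.subset_union_left)
  rcases he c b with hhom | ⟨heb, hne⟩
  · exact hhom.mono hca le_rfl
  · have hea : e c ≤ a := by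
      by_contra! h
      exact hab (Finset.mem_union_right _ (Finset.mem_image_of_mem e hcC))
        (Finset.mem_Ioc.2 ⟨h, heb⟩)
    exact (hf.intervalHomog_of_not_intervalHomog hb heb hσ hne).mono hea le_rfl

theorem exists_isCutSet_card_le (k : ℕ) : ∃ M : ℕ, ∀ (n : ℕ) (sgn : Finset (Fin n) → Bool),
    FlipSeq k sgn → ∃ C : Finset (Fin n), C.card ≤ M ∧ IsCutSet k sgn C := by
  induction k with
  | zero =>
    refine ⟨4, fun n sgn hf => ?_⟩
    cases n with
    | zero => exact ⟨∅, Nat.zero_le _, fun a => a.elim0⟩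
    | succ n =>
      refine hf.exists_isCutSet_of_insert_last_const ∅ fun a b _ _ =>
        ⟨sgn {Fin.last n}, fun B hB _ => ?_⟩
      rw [Finset.card_eq_zero.1 hB, insert_empty_eq]
  | succ k ih =>
    obtain ⟨M, hM⟩ := ih
    refine ⟨2 * (M + 2), fun n sgn hf => ?_⟩
    cases n with
    | zero => exact ⟨∅, Nat.zero_le _, fun a => a.elim0⟩
    | succ n =>
      obtain ⟨C, hCcard, hC⟩ := hM n (lastLink sgn) hf.lastLink
      obtain ⟨D, hDcard, hD⟩ := hf.exists_isCutSet_of_insert_last_const (C.map Fin.castSuccEmb)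
        fun a b => hC.insert_last_const
      rw [Finset.card_map] at hDcard
      exact ⟨D, by lia, hD⟩

lemma exists_strictMono_of_finset {C : Finset (Fin (n + 1))} (h0 : 0 ∈ C)
    (hlast : Fin.last n ∈ C) : ∃ (m : ℕ) (f : Fin (m + 1) → Fin (n + 1)), m + 1 = C.card ∧
      f 0 = 0 ∧ f (Fin.last m) = Fin.last n ∧ StrictMono f ∧
      ∀ j : Fin m, ∀ c ∈ C, c ≤ f j.castSucc ∨ f j.succ ≤ c := by
  obtain ⟨m, hm⟩ : ∃ m, C.card = m + 1 :=
    Nat.exists_eq_succ_of_ne_zero (Finset.card_ne_zero_of_mem h0)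
  set f := C.orderEmbOfFin hm with hf
  have hsurj : ∀ c ∈ C, ∃ j, f j = c := fun c hc => by
    rwa [← Set.mem_range, hf, Finset.range_orderEmbOfFin]
  refine ⟨m, f, hm.symm, ?_, ?_, f.strictMono, fun j c hc => ?_⟩
  · obtain ⟨j, hj⟩ := hsurj 0 h0
    exact Fin.le_zero_iff.1 (hj ▸ f.monotone (Fin.zero_le j))
  · obtain ⟨j, hj⟩ := hsurj _ hlast
    exact (Fin.le_last _).antisymm (hj ▸ f.monotone (Fin.le_last j))
  · obtain ⟨i, rfl⟩ := hsurj c hc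
    simp only [f.le_iff_le]
    grind

lemma IsCutSet.exists_subdivision {sgn : Finset (Fin (n + 1)) → Bool} {C : Finset (Fin (n + 1))}
    (hC : IsCutSet k sgn C) (hk : 0 < k) : ∃ m ≤ 2 * C.card + 1, ∃ f : Fin (m + 1) → Fin (n + 1),
      f 0 = 0 ∧ f (Fin.last m) = Fin.last n ∧ StrictMono f ∧
      ∀ j : Fin m, IntervalHomog k sgn (f j.castSucc) (f j.succ) := by
  set D : Finset (Fin (n + 1)) := C ∪ C.image Order.pred ∪ {0, Fin.last n} with hD
  obtain ⟨m, f, hm, h0, hlast, hf, hgap⟩ :=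
    exists_strictMono_of_finset (C := D) (by simp [hD]) (by simp [hD])
  refine ⟨m, ?_, f, h0, hlast, hf, fun j => ?_⟩
  · have h₁ := Finset.card_union_le (C ∪ C.image Order.pred) {0, Fin.last n}
    have h₂ := Finset.card_union_le C (C.image Order.pred)
    have h₃ := Finset.card_image_le (s := C) (f := Order.pred)
    have h₄ := Finset.card_le_two (a := (0 : Fin (n + 1))) (b := Fin.last n)
    lia
  by_cases hdisj : Disjoint C (Finset.Ioc (f j.castSucc) (f j.succ))
  · exact hC _ _ hdisj
  · obtain ⟨c, hcC, hc⟩ := Finset.not_disjoint_iff.1 hdisj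
    obtain ⟨hac, hcb⟩ := Finset.mem_Ioc.1 hc
    have hbc : f j.succ ≤ c := (hgap j c (by simp [hD, hcC])).resolve_left hac.not_ge
    obtain rfl := hbc.antisymm hcb
    have hpred : Order.pred (f j.succ) ≤ f j.castSucc :=
      (hgap j _ (by simp [hD, Finset.mem_image_of_mem Order.pred hcC])).resolve_right
        (Order.pred_lt_of_not_isMin (not_isMin_of_lt hac)).not_ge
    have hsub : Finset.Icc (f j.castSucc) (f j.succ) ⊆ {f j.castSucc, f j.succ} := by
      intro i hi
      obtain ⟨hi₁, hi₂⟩ := Finset.mem_Icc.1 hi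
      rcases hi₂.eq_or_lt with rfl | hi₂
      · simp
      · simp [hi₁.antisymm' ((Order.le_pred_of_lt hi₂).trans hpred)]
    exact intervalHomog_of_card_Icc_le
      ((Finset.card_le_card hsub).trans (Finset.card_le_two.trans (by lia)))

end Flip

section Orientation

variable {d n : ℕ}

/-- The homogeneous coordinates `(1, x)` of a point `x` of `ℝ^d`. -/
def homogenize : (Fin d → ℝ) →ᵃ[ℝ] (Fin (d + 1) → ℝ) where
  toFun x := Fin.cons 1 x
  linear :=
    { toFun := fun v => Fin.cons 0 v
      map_add' := fun v w => by ext i; cases i using Fin.cases <;> simp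
      map_smul' := fun c v => by ext i; cases i using Fin.cases <;> simp }
  map_vadd' x v := by ext i; cases i using Fin.cases <;> simp

@[simp] lemma homogenize_zero (x : Fin d → ℝ) : homogenize x 0 = 1 := rfl

@[simp] lemma homogenize_succ (x : Fin d → ℝ) (i : Fin d) : homogenize x i.succ = x i := rfl

lemma linearIndependent_homogenize {ι : Type*} {q : ι → Fin d → ℝ} (hq : AffineIndependent ℝ q) :
    LinearIndependent ℝ (fun i => homogenize (q i)) := by
  rw [linearIndependent_iff']
  intro s w hw
  refine affineIndependent_iff.1 hq s w ?_ ?_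
  · simpa using congrFun hw 0
  · ext i
    simpa using congrFun hw i.succ

/-- The determinant with rows `(1, q i)`: up to a positive factor, the signed volume of the simplex
with vertices `q i`. -/
noncomputable def orientDet (q : Fin (d + 1) → Fin d → ℝ) : ℝ :=
  Matrix.detRowAlternating fun i => homogenize (q i)

lemma otSign_eq_sign_orientDet (q : Fin (d + 1) → Fin d → ℝ) :
    otSign q = Real.sign (orientDet q) := by
  rw [otSign, ← Matrix.det_transpose]
  rfl

lemma orientDet_ne_zero {q : Fin (d + 1) → Fin d → ℝ} (hq : AffineIndependent ℝ q) :
    orientDet q ≠ 0 := by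
  have hunit : IsUnit (Matrix.of fun i => homogenize (q i)) :=
    Matrix.linearIndependent_rows_iff_isUnit.1 (linearIndependent_homogenize hq)
  exact ((Matrix.isUnit_iff_isUnit_det _).1 hunit).ne_zero

lemma IsHyperplane.orientDet_eq_zero {h : Set (Fin d → ℝ)} (hh : IsHyperplane h)
    {q : Fin (d + 1) → Fin d → ℝ} (hq : ∀ i, q i ∈ h) : orientDet q = 0 := by
  obtain ⟨u, c, hu, rfl⟩ := hh
  refine Matrix.exists_mulVec_eq_zero_iff.1 ⟨Fin.cons (-c) u, fun h0 => hu ?_, ?_⟩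
  · ext i
    simpa using congrFun h0 i.succ
  · ext i
    have hi : ∑ j, u j * q i j = c := hq i
    simp [Matrix.mulVec, dotProduct, Fin.sum_univ_succ, ← hi, mul_comm]

lemma GeneralPosition.affineIndependent_comp {p : Fin n → Fin d → ℝ} (hp : GeneralPosition p)
    {m : ℕ} (hm : m ≤ d + 1) {e : Fin m → Fin n} (he : Function.Injective e) :
    AffineIndependent ℝ (fun i => p (e i)) := by
  have hcard : (Finset.univ.map ⟨e, he⟩).card ≤ d + 1 := by simpa using hm
  exact (hp _ hcard).comp_embedding
    ⟨fun i => ⟨e i, by simp⟩, fun i j hij => he (congrArg Subtype.val hij)⟩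

end Orientation

section Convex

variable {d n : ℕ} {p : Fin n → Fin d → ℝ}

lemma multilinearMap_lineMap_eq_sum {ι V W : Type*} [Fintype ι] [DecidableEq ι]
    [AddCommGroup V] [Module ℝ V] [AddCommGroup W] [Module ℝ W]
    (f : MultilinearMap ℝ (fun _ : ι => V) W) (a b : ι → V) (s : ι → ℝ) :
    f (fun i => AffineMap.lineMap (a i) (b i) (s i)) =
      ∑ T : Finset ι, (∏ i, if i ∈ T then s i else 1 - s i) • f (T.piecewise b a) := by
  have hsum : (fun i => AffineMap.lineMap (a i) (b i) (s i)) =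
      (fun i => s i • b i) + fun i => (1 - s i) • a i := by
    ext1 i
    rw [AffineMap.lineMap_apply_module, add_comm, Pi.add_apply]
  rw [hsum, f.map_add_univ]
  refine Finset.sum_congr rfl fun T _ => ?_
  rw [← f.map_smul_univ]
  congr 1 with i
  by_cases hi : i ∈ T <;> simp [hi]

lemma OrderTypeHomogeneous.exists_mul_orientDet_pos (hp : OrderTypeHomogeneous p) :
    ∃ σ : ℝ, ∀ F : Fin (d + 1) → Fin n, StrictMono F → 0 < σ * orientDet fun i => p (F i) := by
  obtain ⟨σ, hσ, hF⟩ := hp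
  refine ⟨σ, fun F hmono => ?_⟩
  have hsign := hF F hmono
  rw [otSign_eq_sign_orientDet] at hsign
  rw [← hsign]
  exact Real.sign_mul_pos_of_ne_zero _ fun h0 => hσ (by rw [← hsign, h0, Real.sign_zero])

lemma mul_orientDet_nonneg {σ : ℝ}
    (hσ : ∀ F : Fin (d + 1) → Fin n, StrictMono F → 0 < σ * orientDet fun i => p (F i))
    {F : Fin (d + 1) → Fin n} (hF : Monotone F) : 0 ≤ σ * orientDet fun i => p (F i) := by
  by_cases hinj : Function.Injective F
  · exact (hσ F (hF.strictMono_of_injective hinj)).le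
  · obtain ⟨i, j, hij, hne⟩ := Function.not_injective_iff.1 hinj
    rw [orientDet, AlternatingMap.map_eq_zero_of_eq _ _ (by simp only [hij]) hne, mul_zero]

/-- Expanding the determinant in every row, each term belongs to a monotone choice of endpoints, and
the term choosing all left endpoints is strictly monotone with a positive coefficient. -/
lemma orientDet_lineMap_ne_zero {σ : ℝ}
    (hσ : ∀ F : Fin (d + 1) → Fin n, StrictMono F → 0 < σ * orientDet fun i => p (F i))
    {e : Fin (d + 1) → Fin n} (he : StrictMono e) {s : Fin (d + 1) → ℝ}
    (hs : ∀ j, s j ∈ Ico (0 : ℝ) 1) :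
    orientDet (fun j => AffineMap.lineMap (p (e j)) (p (Order.succ (e j))) (s j)) ≠ 0 := by
  set F : Finset (Fin (d + 1)) → Fin (d + 1) → Fin n :=
    fun T => T.piecewise (fun j => Order.succ (e j)) e with hF
  have hmono : ∀ T, Monotone (F T) := by
    refine fun T => monotone_iff_forall_lt.2 fun i j hij => ?_
    have hle : F T i ≤ Order.succ (e i) := by
      by_cases hi : i ∈ T <;> simp [hF, hi, Order.le_succ]
    have hge : e j ≤ F T j := by
      by_cases hj : j ∈ T <;> simp [hF, hj, Order.le_succ]
    exact hle.trans ((Order.succ_le_of_lt (he hij)).trans hge)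
  have hexpand : σ * orientDet (fun j => AffineMap.lineMap (p (e j)) (p (Order.succ (e j))) (s j)) =
      ∑ T : Finset (Fin (d + 1)), (∏ j, if j ∈ T then s j else 1 - s j) *
        (σ * orientDet fun j => p (F T j)) := by
    have hpiece : ∀ T : Finset (Fin (d + 1)),
        T.piecewise (fun j => homogenize (p (Order.succ (e j)))) (fun j => homogenize (p (e j))) =
          fun j => homogenize (p (F T j)) := fun T => by
      ext1 j
      by_cases hj : j ∈ T <;> simp [hF, hj]
    simp only [orientDet, AffineMap.apply_lineMap, ← AlternatingMap.coe_multilinearMap,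
      multilinearMap_lineMap_eq_sum, hpiece, smul_eq_mul, Finset.mul_sum, mul_left_comm]
  have hpos : 0 < σ * orientDet
      (fun j => AffineMap.lineMap (p (e j)) (p (Order.succ (e j))) (s j)) := by
    rw [hexpand]
    refine Finset.sum_pos' (fun T _ => mul_nonneg (Finset.prod_nonneg fun j _ => ?_)
      (mul_orientDet_nonneg hσ (hmono T))) ⟨∅, Finset.mem_univ _, ?_⟩
    · split_ifs
      exacts [(hs j).1, sub_nonneg.2 (hs j).2.le]
    · refine mul_pos (Finset.prod_pos fun j _ => ?_) (hσ _ (by simpa [hF] using he))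
      simpa using (hs j).2
  exact right_ne_zero_of_mul hpos.ne'

lemma orderSucc_eq_mk {i : Fin n} (hi : (i : ℕ) + 1 < n) : Order.succ i = ⟨i + 1, hi⟩ :=
  CovBy.succ_eq (Fin.covBy_iff.2 (by simp))

lemma exists_lineMap_of_mem_pathSet {x : Fin d → ℝ} (hx : x ∈ PathSet p) :
    ∃ i, ∃ s ∈ Ico (0 : ℝ) 1, AffineMap.lineMap (p i) (p (Order.succ i)) s = x := by
  obtain ⟨i, hi, hx⟩ := mem_iUnion₂.1 hx
  rw [segment_eq_image_lineMap, ← orderSucc_eq_mk hi] at hx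
  obtain ⟨s, hs, rfl⟩ := hx
  rcases hs.2.eq_or_lt with rfl | hs1
  · exact ⟨Order.succ i, 0, by simp, by simp⟩
  · exact ⟨i, s, ⟨hs.1, hs1⟩, rfl⟩

lemma IsHyperplane.subsingleton_segment_inter {h : Set (Fin d → ℝ)} (hh : IsHyperplane h)
    {a b : Fin d → ℝ} (hab : ¬ segment ℝ a b ⊆ h) : (segment ℝ a b ∩ h).Subsingleton := by
  obtain ⟨u, c, -, rfl⟩ := hh
  set f : (Fin d → ℝ) →ᵃ[ℝ] ℝ := (Fintype.linearCombination ℝ u).toAffineMap with hf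
  have hmem : ∀ x, x ∈ {x : Fin d → ℝ | ∑ i, u i * x i = c} ↔ f x = c := by
    simp [hf, Fintype.linearCombination_apply, mul_comm]
  simp only [segment_eq_image_lineMap] at hab ⊢
  rintro _ ⟨⟨s, -, rfl⟩, hs⟩ _ ⟨⟨t, -, rfl⟩, ht⟩
  rw [hmem, f.apply_lineMap] at hs ht
  by_cases hfab : f a = f b
  · refine absurd ?_ hab
    rintro _ ⟨r, -, rfl⟩
    rw [hfab, AffineMap.lineMap_same_apply] at hs
    rw [hmem, f.apply_lineMap, hfab, AffineMap.lineMap_same_apply, hs]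
  · rw [AffineMap.lineMap_injective ℝ hfab (hs.trans ht.symm)]

lemma IsHyperplane.subsingleton_edge_inter {h : Set (Fin d → ℝ)} (hh : IsHyperplane h)
    (hedge : ∀ (i : Fin n) (hi : (i : ℕ) + 1 < n), ¬ segment ℝ (p i) (p ⟨i + 1, hi⟩) ⊆ h)
    (i : Fin n) : (segment ℝ (p i) (p (Order.succ i)) ∩ h).Subsingleton := by
  by_cases hi : (i : ℕ) + 1 < n
  · rw [orderSucc_eq_mk hi]
    exact hh.subsingleton_segment_inter (hedge i hi)
  · have hmax : IsMax i := fun j _ => Fin.le_def.2 (by lia)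
    rw [hmax.succ_eq, segment_same]
    exact subsingleton_singleton.anti inter_subset_left

/-- A hyperplane point is determined by the edge containing it, so `d + 1` of them would lie on
`d + 1` different edges and be affinely dependent. -/
theorem OrderTypeHomogeneous.pathCrossing (hp : OrderTypeHomogeneous p) : PathCrossing d p := by
  classical
  intro h hh hedge
  obtain ⟨σ, hσ⟩ := hp.exists_mul_orientDet_pos
  set J : Finset (Fin n) := {i | ∃ s ∈ Ico (0 : ℝ) 1,
    AffineMap.lineMap (p i) (p (Order.succ i)) s ∈ h}
  choose! s hs hsh using fun i (hi : i ∈ J) => (Finset.mem_filter.1 hi).2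
  have hmem_edge : ∀ i, ∀ t ∈ Ico (0 : ℝ) 1,
      AffineMap.lineMap (p i) (p (Order.succ i)) t ∈ segment ℝ (p i) (p (Order.succ i)) :=
    fun i t ht => lineMap_mem_segment ℝ _ _ (Ico_subset_Icc_self ht)
  have hsub : PathSet p ∩ h ⊆
      J.image fun i => AffineMap.lineMap (p i) (p (Order.succ i)) (s i) := by
    rintro x ⟨hx, hxh⟩
    obtain ⟨i, t, ht, rfl⟩ := exists_lineMap_of_mem_pathSet hx
    have hi : i ∈ J := Finset.mem_filter.2 ⟨Finset.mem_univ i, t, ht, hxh⟩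
    rw [hh.subsingleton_edge_inter hedge i ⟨hmem_edge i t ht, hxh⟩
      ⟨hmem_edge i (s i) (hs i hi), hsh i hi⟩]
    exact Finset.mem_image_of_mem _ hi
  have hJcard : J.card ≤ d := by
    by_contra! hlt
    obtain ⟨K, hKJ, hK⟩ := Finset.exists_subset_card_eq (Nat.succ_le_of_lt hlt)
    have hmem : ∀ j, K.orderEmbOfFin hK j ∈ J := fun j => hKJ (Finset.orderEmbOfFin_mem K hK j)
    exact orientDet_lineMap_ne_zero hσ (K.orderEmbOfFin hK).strictMono
      (fun j => hs _ (hmem j)) (hh.orientDet_eq_zero fun j => hsh _ (hmem j))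
  calc (PathSet p ∩ h).encard ≤ J.card := by
        refine (encard_le_encard hsub).trans ?_
        rw [encard_coe_eq_coe_finsetCard]
        exact_mod_cast Finset.card_image_le
    _ ≤ d := by exact_mod_cast hJcard

end Convex

section LevelSets

open scoped Topology

lemma exists_notMem_forall_mul_sub_pos {ι : Type*} [Finite ι] {ε g : ι → ℝ}
    (hg : ∀ q, 0 < ε q * g q) {Y : Set ℝ} (hY : Y.Finite) :
    ∃ c ∉ Y, ∀ q, 0 < ε q * (g q - c) := by
  have hev : ∀ᶠ c in 𝓝 (0 : ℝ), ∀ q, 0 < ε q * (g q - c) := by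
    refine Filter.eventually_all.2 fun q => ?_
    have hcont : Continuous fun c => ε q * (g q - c) := by fun_prop
    exact hcont.continuousAt.eventually_const_lt (by simpa using hg q)
  have hY' : ∀ᶠ c in 𝓝[≠] (0 : ℝ), c ∉ Y := nhdsNE_le_cofinite 0 hY.compl_mem_cofinite
  exact (hY'.and (hev.filter_mono nhdsWithin_le_nhds)).exists

lemma exists_mem_segment_eq {E : Type*} [AddCommGroup E] [Module ℝ E] (f : E →ᵃ[ℝ] ℝ) {a b : E}
    {c : ℝ} (h : (f a - c) * (f b - c) ≤ 0) : ∃ x ∈ segment ℝ a b, f x = c := by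
  have hc : c ∈ f '' segment ℝ a b := by
    rw [image_segment, segment_eq_uIcc, mem_uIcc]
    rcases mul_nonpos_iff.1 h with ⟨ha, hb⟩ | ⟨ha, hb⟩
    · exact Or.inr ⟨sub_nonpos.1 hb, sub_nonneg.1 ha⟩
    · exact Or.inl ⟨sub_nonpos.1 ha, sub_nonneg.1 hb⟩
  exact hc

lemma exists_and_not_succ {α : Type*} [LinearOrder α] [SuccOrder α] [IsSuccArchimedean α]
    {P : α → Prop} {a b : α} (hab : a ≤ b) (ha : P a) (hb : ¬ P b) :
    ∃ m ∈ Ico a b, P m ∧ ¬ P (Order.succ m) := by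
  by_contra! hstep
  refine hb (Succ.rec (P := fun m _ => m ≤ b → P m) (fun _ => ha) (fun m ham ih hmb => ?_)
    hab le_rfl)
  rcases ((Order.le_succ m).trans hmb).lt_or_eq with hlt | rfl
  · exact hstep m ⟨ham, hlt⟩ (ih hlt.le)
  · rw [hmb.antisymm (Order.le_succ m)]
    exact ih le_rfl

lemma exists_mem_edge_eq {E : Type*} [AddCommGroup E] [Module ℝ E] {n : ℕ} {p : Fin n → E}
    (f : E →ᵃ[ℝ] ℝ) {c : ℝ} {a b : Fin n} (hab : a < b) (h : (f (p a) - c) * (f (p b) - c) < 0) :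
    ∃ m ∈ Ico a b, ∃ x ∈ segment ℝ (p m) (p (Order.succ m)), f x = c := by
  have hne : f (p a) - c ≠ 0 := left_ne_zero_of_mul h.ne
  obtain ⟨m, hm, hpos, hneg⟩ := exists_and_not_succ
    (P := fun m => 0 < (f (p a) - c) * (f (p m) - c)) hab.le (mul_self_pos.2 hne) h.not_gt
  refine ⟨m, hm, exists_mem_segment_eq f ?_⟩
  by_contra! hmul
  refine hneg (pos_of_mul_pos_left ?_ (sq_nonneg (f (p m) - c)))
  calc 0 < ((f (p a) - c) * (f (p m) - c)) * ((f (p m) - c) * (f (p (Order.succ m)) - c)) :=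
        mul_pos hpos hmul
    _ = (f (p a) - c) * (f (p (Order.succ m)) - c) * (f (p m) - c) ^ 2 := by ring

lemma isHyperplane_setOf_eq {d : ℕ} (f : (Fin d → ℝ) →ᵃ[ℝ] ℝ) {x y : Fin d → ℝ} (hxy : f x ≠ f y)
    (c : ℝ) : IsHyperplane {x | f x = c} := by
  set u : Fin d → ℝ := fun i => f.linear fun j => if i = j then 1 else 0
  have hf : ∀ x, f x = ∑ i, u i * x i + f 0 := fun x => by
    have hx := congrFun f.decomp x
    rw [Pi.add_apply, f.linear.pi_apply_eq_sum_univ x] at hx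
    simpa only [smul_eq_mul, mul_comm] using hx
  refine ⟨u, c - f 0, fun h0 => hxy ?_, ?_⟩
  · simp only [hf x, hf y, h0, Pi.zero_apply, zero_mul]
  · simp only [eq_sub_iff_add_eq, ← hf]

end LevelSets

section Alternation

variable {d n : ℕ} {p : Fin n → Fin d → ℝ}

lemma segment_subset_affineSpan_pair {E : Type*} [AddCommGroup E] [Module ℝ E] {a b x y : E}
    (hx : x ∈ segment ℝ a b) (hy : y ∈ segment ℝ a b) (hxy : x ≠ y) :
    segment ℝ a b ⊆ line[ℝ, x, y] := by
  have hline : ∀ z ∈ segment ℝ a b, z ∈ line[ℝ, a, b] := fun z hz => by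
    rw [segment_eq_image_lineMap] at hz
    obtain ⟨t, -, rfl⟩ := hz
    exact AffineMap.lineMap_mem_affineSpan_pair t a b
  have hcol : Collinear ℝ ({x, y, a, b} : Set E) :=
    collinear_insert_insert_of_mem_affineSpan_pair (hline x hx) (hline y hy)
  intro z hz
  have hspan : line[ℝ, a, b] ≤ line[ℝ, x, y] := affineSpan_pair_le_of_mem_of_mem
    (hcol.mem_affineSpan_of_mem_of_ne (by simp) (by simp) (by simp) hxy)
    (hcol.mem_affineSpan_of_mem_of_ne (by simp) (by simp) (by simp) hxy)
  exact hspan (hline z hz)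

lemma GeneralPosition.subsingleton_edge_inter_edge (hp : GeneralPosition p) (hd : 2 ≤ d)
    {i j : Fin n} (hij : i < j) :
    (segment ℝ (p i) (p (Order.succ i)) ∩ segment ℝ (p j) (p (Order.succ j))).Subsingleton := by
  rintro x ⟨hxi, hxj⟩ y ⟨hyi, hyj⟩
  by_contra hxy
  rcases (Order.le_succ j).eq_or_lt with hj | hj
  · rw [← hj, segment_same] at hxj hyj
    exact hxy (hxj.trans hyj.symm)
  have hcol : Collinear ℝ ({p i, p j, p (Order.succ j)} : Set (Fin d → ℝ)) := by
    refine collinear_triple_of_mem_affineSpan_pair (p₄ := x) (p₅ := y) ?_ ?_ ?_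
    · exact segment_subset_affineSpan_pair hxi hyi hxy (left_mem_segment ℝ _ _)
    · exact segment_subset_affineSpan_pair hxj hyj hxy (left_mem_segment ℝ _ _)
    · exact segment_subset_affineSpan_pair hxj hyj hxy (right_mem_segment ℝ _ _)
  have hinj : StrictMono ![i, j, Order.succ j] := by
    refine Fin.strictMono_iff_lt_succ.2 fun k => ?_
    fin_cases k <;> simp [hij, hj]
  have hind := hp.affineIndependent_comp (by lia) hinj.injective
  rw [affineIndependent_iff_not_collinear_of_ne (i₁ := 0) (i₂ := 1) (i₃ := 2)
    (by decide) (by decide) (by decide)] at hind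
  exact hind hcol

lemma GeneralPosition.finite_crossings (hp : GeneralPosition p) (hd : 2 ≤ d) :
    (⋃ (i : Fin n) (j : Fin n) (_ : i ≠ j),
      segment ℝ (p i) (p (Order.succ i)) ∩ segment ℝ (p j) (p (Order.succ j))).Finite := by
  refine finite_iUnion fun i => finite_iUnion fun j => finite_iUnion fun hij => ?_
  rcases hij.lt_or_gt with hij | hij
  · exact (hp.subsingleton_edge_inter_edge hd hij).finite
  · rw [inter_comm]
    exact (hp.subsingleton_edge_inter_edge hd hij).finite

lemma PathCrossing.le_of_level {k N : ℕ} (hcross : PathCrossing k p) {f : (Fin d → ℝ) →ᵃ[ℝ] ℝ}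
    {a b : Fin d → ℝ} (hne : f a ≠ f b) {c : ℝ}
    (hc : ∀ i j, i ≠ j → ∀ x ∈ segment ℝ (p i) (p (Order.succ i)),
      x ∈ segment ℝ (p j) (p (Order.succ j)) → f x ≠ c)
    {m : Fin N → Fin n} (hm : Function.Injective m) (hlt : ∀ q, (m q : ℕ) + 1 < n)
    {x : Fin N → Fin d → ℝ} (hxm : ∀ q, x q ∈ segment ℝ (p (m q)) (p (Order.succ (m q))))
    (hfx : ∀ q, f (x q) = c) : N ≤ k := by
  have hx_inj : Function.Injective x := fun q r hqr => by
    by_contra hqr'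
    exact hc _ _ (hm.ne hqr') (x q) (hxm q) (hqr ▸ hxm r) (hfx q)
  have hno_edge : ∀ (i : Fin n) (hi : (i : ℕ) + 1 < n),
      ¬ segment ℝ (p i) (p ⟨i + 1, hi⟩) ⊆ {x | f x = c} := fun i hi hsub => by
    rw [← orderSucc_eq_mk hi] at hsub
    have hi' : i < Order.succ i := by
      rw [orderSucc_eq_mk hi]
      exact Nat.lt_succ_self _
    exact hc i (Order.succ i) hi'.ne _ (right_mem_segment ℝ _ _) (left_mem_segment ℝ _ _)
      (hsub (right_mem_segment ℝ _ _))
  have hrange : range x ⊆ PathSet p ∩ {x | f x = c} := by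
    rintro _ ⟨q, rfl⟩
    refine ⟨mem_iUnion₂.2 ⟨m q, hlt q, ?_⟩, hfx q⟩
    rw [← orderSucc_eq_mk (hlt q)]
    exact hxm q
  have hcard := (hx_inj.encard_range.trans (encard_le_encard hrange)).trans
    (hcross _ (isHyperplane_setOf_eq f hne c) hno_edge)
  rw [ENat.card_eq_coe_fintype_card, Fintype.card_fin] at hcard
  exact_mod_cast hcard

/-- Move the hyperplane `f = 0` to a level that misses all intersections of two edges; between
consecutive `β q` it is then crossed in pairwise different points. -/
lemma PathCrossing.not_alternating {k : ℕ} (hcross : PathCrossing k p) (hp : GeneralPosition p)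
    (hd : 2 ≤ d) (f : (Fin d → ℝ) →ᵃ[ℝ] ℝ) {β : Fin (k + 2) → Fin n} (hβ : StrictMono β) :
    ¬ ∀ q : Fin (k + 2), 0 < (-1) ^ (q : ℕ) * f (p (β q)) := by
  intro halt
  obtain ⟨c, hcX, hc⟩ := exists_notMem_forall_mul_sub_pos halt ((hp.finite_crossings hd).image f)
  have hsign : ∀ q : Fin (k + 1), (f (p (β q.castSucc)) - c) * (f (p (β q.succ)) - c) < 0 := by
    intro q
    have hmul := mul_pos (hc q.castSucc) (hc q.succ)
    rw [Fin.val_succ, Fin.val_castSucc, mul_mul_mul_comm, ← pow_add] at hmul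
    rw [Odd.neg_one_pow ⟨(q : ℕ), by lia⟩] at hmul
    linarith
  choose m hm x hxm hfx using fun q => exists_mem_edge_eq f (hβ q.castSucc_lt_succ) (hsign q)
  have hm_mono : StrictMono m := fun q r hqr => ((hm q).2.trans_le
    (hβ.monotone (Fin.succ_le_castSucc_iff.2 hqr))).trans_le (hm r).1
  have hne : f (p (β 0)) ≠ f (p (β 1)) := fun h => by
    have h01 := hsign 0
    rw [Fin.castSucc_zero, Fin.succ_zero_eq_one, h] at h01
    exact h01.not_ge (mul_self_nonneg _)
  refine (Nat.lt_succ_self k).not_ge (hcross.le_of_level hne ?_ hm_mono.injective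
    (fun q => (Nat.succ_le_of_lt (hm q).2).trans_lt (β q.succ).isLt) hxm hfx)
  refine fun i j hij x hxi hxj hfx => hcX ⟨x, ?_, hfx⟩
  simp only [mem_iUnion]
  exact ⟨i, j, hij, hxi, hxj⟩

end Alternation

section Ranks

variable {α : Type*} [LinearOrder α]

lemma card_filter_lt_orderEmbOfFin {S : Finset α} {m : ℕ} (h : S.card = m) (q : Fin m) :
    (S.filter (· < S.orderEmbOfFin h q)).card = q := by
  have hmap : (Finset.univ.map (S.orderEmbOfFin h).toEmbedding).filter (· < S.orderEmbOfFin h q) =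
      (Finset.Iio q).map (S.orderEmbOfFin h).toEmbedding := by
    rw [Finset.filter_map]
    congr 1
    ext i
    simp
  rw [Finset.map_orderEmbOfFin_univ] at hmap
  rw [hmap, Finset.card_map, Fin.card_Iio]

lemma orderEmbOfFin_insert {A : Finset α} {v : α} {m : ℕ} (hA : A.card = m)
    (h : (insert v A).card = m + 1) :
    ∃ r : Fin (m + 1), (r : ℕ) = (A.filter (· < v)).card ∧
      ⇑((insert v A).orderEmbOfFin h) = r.insertNth v (A.orderEmbOfFin hA) := by
  set E := (insert v A).orderEmbOfFin h with hE
  obtain ⟨r, hr⟩ : v ∈ range E := by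
    rw [hE, Finset.range_orderEmbOfFin]
    exact Finset.mem_insert_self v A
  refine ⟨r, ?_, ?_⟩
  · rw [← card_filter_lt_orderEmbOfFin h r, ← hE, hr, Finset.filter_insert, if_neg (lt_irrefl v)]
  · have hremove : r.removeNth E = A.orderEmbOfFin hA := by
      refine Finset.orderEmbOfFin_unique hA (fun j => ?_)
        (E.strictMono.comp (Fin.strictMono_succAbove r))
      have hmem : E (r.succAbove j) ∈ insert v A := Finset.orderEmbOfFin_mem _ h _
      exact Finset.mem_of_mem_insert_of_ne hmem fun h' =>
        Fin.succAbove_ne r j (E.injective (h'.trans hr.symm))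
    rw [← hremove, ← hr, Fin.insertNth_self_removeNth]

end Ranks

section Flips

variable {d n : ℕ} {p : Fin n → Fin d → ℝ}

/-- The linear form on homogeneous coordinates that vanishes at the points `q`: its sign tells on
which side of the hyperplane through them a point lies. -/
noncomputable def sideForm (q : Fin d → Fin d → ℝ) : Module.Dual ℝ (Fin (d + 1) → ℝ) where
  toFun w := Matrix.detRowAlternating.curryLeft w fun i => homogenize (q i)
  map_add' v w := by simp
  map_smul' c w := by simp

lemma sideForm_self (q : Fin d → Fin d → ℝ) (i : Fin d) : sideForm q (homogenize (q i)) = 0 :=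
  Matrix.detRowAlternating.map_eq_zero_of_eq _ (by simp) (Fin.succ_ne_zero i).symm

lemma orientDet_insertNth (r : Fin (d + 1)) (x : Fin d → ℝ) (q : Fin d → Fin d → ℝ) :
    orientDet (r.insertNth x q) = (-1) ^ (r : ℕ) * sideForm q (homogenize x) := by
  have hcomp : (fun i => homogenize ((r.insertNth x q : Fin (d + 1) → Fin d → ℝ) i)) =
      r.insertNth (homogenize x) fun i => homogenize (q i) := by
    ext1 i
    cases i using r.succAboveCases <;> simp
  rw [orientDet, hcomp, AlternatingMap.map_insertNth, zsmul_eq_mul]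
  push_cast
  rfl

lemma finsetSign_insert {A : Finset (Fin n)} (hA : A.card = d) {v : Fin n} (hv : v ∉ A) :
    finsetSign p (insert v A) = Real.sign ((-1) ^ (A.filter (· < v)).card *
      sideForm (fun i => p (A.orderEmbOfFin hA i)) (homogenize (p v))) := by
  have hcard : (insert v A).card = d + 1 := by rw [Finset.card_insert_of_notMem hv, hA]
  obtain ⟨r, hr, hE⟩ := orderEmbOfFin_insert hA hcard
  have hcomp : (fun j => p ((insert v A).orderEmbOfFin hcard j)) =
      r.insertNth (p v) fun j => p (A.orderEmbOfFin hA j) := by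
    ext1 j
    rw [hE]
    cases j using r.succAboveCases <;> simp
  rw [← hr, ← orientDet_insertNth, ← hcomp, ← otSign_eq_sign_orientDet, finsetSign, dif_pos hcard]
  rfl

lemma GeneralPosition.finsetSign_ne_zero (hp : GeneralPosition p) {S : Finset (Fin n)}
    (hS : S.card = d + 1) : finsetSign p S ≠ 0 := by
  rw [finsetSign, dif_pos hS, otSign_eq_sign_orientDet]
  exact fun h => orientDet_ne_zero (hp.affineIndependent_comp le_rfl
    (S.orderEmbOfFin hS).injective) (Real.sign_eq_zero_iff.1 h)

/-- The signs of a point sequence in general position as Booleans: `true` for positive tuples. -/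
noncomputable def boolSign (p : Fin n → Fin d → ℝ) (S : Finset (Fin n)) : Bool :=
  decide (0 < finsetSign p S)

lemma mul_neg_of_decide_pos_ne {x y : ℝ} (hx : x ≠ 0) (hy : y ≠ 0)
    (h : decide (0 < x) ≠ decide (0 < y)) : x * y < 0 := by
  rcases hx.lt_or_gt with hx | hx <;> rcases hy.lt_or_gt with hy | hy
  · simp [hx.not_gt, hy.not_gt] at h
  · exact mul_neg_of_neg_of_pos hx hy
  · exact mul_neg_of_pos_of_neg hx hy
  · simp [hx, hy] at h

lemma real_sign_pos_iff {x : ℝ} : 0 < Real.sign x ↔ 0 < x := by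
  rcases lt_trichotomy x 0 with hx | rfl | hx
  · simp [Real.sign_of_neg hx, hx.not_gt]
  · simp
  · simp [Real.sign_of_pos hx, hx]

lemma GeneralPosition.mul_neg_of_boolSign_ne (hp : GeneralPosition p) {A : Finset (Fin n)}
    (hA : A.card = d) {v w : Fin n} (hv : v ∉ A) (hw : w ∉ A)
    (h : boolSign p (insert v A) ≠ boolSign p (insert w A)) :
    ((-1) ^ (A.filter (· < v)).card *
      sideForm (fun i => p (A.orderEmbOfFin hA i)) (homogenize (p v))) *
    ((-1) ^ (A.filter (· < w)).card *
      sideForm (fun i => p (A.orderEmbOfFin hA i)) (homogenize (p w))) < 0 := by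
  have hne : ∀ u, u ∉ A → (-1) ^ (A.filter (· < u)).card *
      sideForm (fun i => p (A.orderEmbOfFin hA i)) (homogenize (p u)) ≠ 0 := fun u hu h0 => by
    refine hp.finsetSign_ne_zero (S := insert u A) (by rw [Finset.card_insert_of_notMem hu, hA]) ?_
    rw [finsetSign_insert hA hu, h0, Real.sign_zero]
  refine mul_neg_of_decide_pos_ne (hne v hv) (hne w hw) ?_
  simpa only [boolSign, finsetSign_insert hA hv, finsetSign_insert hA hw, real_sign_pos_iff] using h

lemma exists_dual_pos_union {ι V : Type*} [AddCommGroup V] [Module ℝ V] [DecidableEq ι]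
    {w : ι → V} {A F : Finset ι} (hA : LinearIndepOn ℝ w (A : Set ι)) {φ : Module.Dual ℝ V}
    (hφA : ∀ a ∈ A, φ (w a) = 0) (hφF : ∀ v ∈ F, 0 < φ (w v)) :
    ∃ ψ : Module.Dual ℝ V, ∀ v ∈ A ∪ F, 0 < ψ (w v) := by
  obtain ⟨h, hh⟩ := Module.exists_dual_forall_apply_eq_one hA
  have hev : ∀ᶠ ε in nhds (0 : ℝ), ∀ v ∈ F, 0 < φ (w v) + ε * h (w v) := by
    refine (Filter.eventually_all_finset F).2 fun v hv => ?_
    have hcont : Continuous fun ε => φ (w v) + ε * h (w v) := by fun_prop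
    exact hcont.continuousAt.eventually_const_lt (by simpa using hφF v hv)
  obtain ⟨ε, hεF, hε⟩ := ((hev.filter_mono nhdsWithin_le_nhds).and
    (self_mem_nhdsWithin (s := Ioi 0))).exists
  refine ⟨φ + ε • h, fun v hv => ?_⟩
  rw [LinearMap.add_apply, LinearMap.smul_apply, smul_eq_mul]
  rcases Finset.mem_union.1 hv with hv | hv
  · rw [hφA v hv, hh v hv, zero_add, mul_one]
    exact hε
  · exact hεF v hv

/-- A form `φ` as below can be perturbed into one that alternates along all of `A ∪ F`. -/
lemma PathCrossing.not_forall_pos {k : ℕ} (hcross : PathCrossing k p) (hp : GeneralPosition p)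
    (hd : 2 ≤ d) {A F : Finset (Fin n)} (hA : A.card ≤ d + 1) (hAF : (A ∪ F).card = k + 2)
    {φ : Module.Dual ℝ (Fin (d + 1) → ℝ)} (hφ : ∀ a ∈ A, φ (homogenize (p a)) = 0) :
    ¬ ∀ v ∈ F, 0 < (-1) ^ ((A ∪ F).filter (· < v)).card * φ (homogenize (p v)) := by
  intro hF
  set τ : Fin n → ℝˣ := fun v => (-1) ^ ((A ∪ F).filter (· < v)).card with hτ
  have hA' : LinearIndepOn ℝ (fun v => τ v • homogenize (p v)) (A : Set (Fin n)) :=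
    (linearIndependent_homogenize (hp A hA)).units_smul fun a => τ a
  obtain ⟨ψ, hψ⟩ := exists_dual_pos_union hA' (φ := φ) (F := F)
    (fun a ha => by rw [Units.smul_def, map_smul, hφ a ha, smul_zero])
    (fun v hv => by simpa [hτ, Units.smul_def] using hF v hv)
  refine hcross.not_alternating hp hd (ψ.toAffineMap.comp homogenize)
    ((A ∪ F).orderEmbOfFin hAF).strictMono fun q => ?_
  simpa [hτ, Units.smul_def, card_filter_lt_orderEmbOfFin] using
    hψ _ (Finset.orderEmbOfFin_mem _ hAF q)

lemma forall_mem_triple_pos {α : Type*} [LinearOrder α] {E : α → ℝ} {i j l : α} (hij : i < j)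
    (hjl : j < l) (hEij : E i * E j < 0) (hEjl : E j * E l < 0) :
    ∀ v ∈ ({i, j, l} : Finset α),
      0 < (-1) ^ (({i, j, l} : Finset α).filter (· < v)).card * (E i * E v) := by
  have hil := hij.trans hjl
  have hi : ({i, j, l} : Finset α).filter (· < i) = ∅ := by
    simp [Finset.filter_insert, Finset.filter_singleton, hij.not_gt, hil.not_gt]
  have hj : ({i, j, l} : Finset α).filter (· < j) = {i} := by
    simp [Finset.filter_insert, Finset.filter_singleton, hij, hjl.not_gt]
  have hl : ({i, j, l} : Finset α).filter (· < l) = {i, j} := by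
    simp [Finset.filter_insert, Finset.filter_singleton, hjl, hil]
  have hEil : 0 < E i * E l := by
    refine pos_of_mul_pos_left ?_ (sq_nonneg (E j))
    calc 0 < (E i * E j) * (E j * E l) := mul_pos_of_neg_of_neg hEij hEjl
      _ = E i * E l * E j ^ 2 := by ring
  intro v hv
  simp only [Finset.mem_insert, Finset.mem_singleton] at hv
  rcases hv with rfl | rfl | rfl
  · simpa [hi] using left_ne_zero_of_mul hEij.ne
  · simpa [hj] using hEij
  · simpa [hl, Finset.card_pair hij.ne] using hEil

theorem GeneralPosition.flipSeq_boolSign (hp : GeneralPosition p) (hcross : PathCrossing (d + 1) p)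
    (hd : 2 ≤ d) : FlipSeq d (boolSign p) := by
  rintro A hA ⟨i, j, l, hij, hjl, hi, hj, hl, hne, hne'⟩
  set φ := sideForm fun a => p (A.orderEmbOfFin hA a) with hφ
  set E : Fin n → ℝ := fun v => (-1) ^ (A.filter (· < v)).card * φ (homogenize (p v)) with hE
  have hdisj : Disjoint A {i, j, l} := by simp [hi, hj, hl]
  have hcard : (A ∪ {i, j, l}).card = d + 1 + 2 := by
    rw [Finset.card_union_of_disjoint hdisj, hA,
      Finset.card_eq_three.2 ⟨i, j, l, hij.ne, (hij.trans hjl).ne, hjl.ne, rfl⟩]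
  have hpos := forall_mem_triple_pos (E := E) hij hjl (hp.mul_neg_of_boolSign_ne hA hi hj hne)
    (hp.mul_neg_of_boolSign_ne hA hj hl hne')
  refine hcross.not_forall_pos hp hd (φ := E i • φ) (hA.trans_le d.le_succ) hcard
    (fun a ha => ?_) (fun v hv => ?_)
  · obtain ⟨b, rfl⟩ : a ∈ range (A.orderEmbOfFin hA) := by rwa [Finset.range_orderEmbOfFin]
    rw [LinearMap.smul_apply, hφ, sideForm_self, smul_zero]
  · calc 0 < (-1) ^ (({i, j, l} : Finset (Fin n)).filter (· < v)).card * (E i * E v) := hpos v hv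
      _ = (-1) ^ ((A ∪ {i, j, l}).filter (· < v)).card * (E i • φ) (homogenize (p v)) := by
        rw [Finset.filter_union,
          Finset.card_union_of_disjoint (Finset.disjoint_filter_filter hdisj), pow_add,
          LinearMap.smul_apply, smul_eq_mul, hE]
        ring

end Flips

section Blocks

variable {d n : ℕ} {p : Fin n → Fin d → ℝ}

lemma finsetSign_map {e : Fin (d + 1) → Fin n} (he : StrictMono e) :
    finsetSign p (Finset.univ.map ⟨e, he.injective⟩) = otSign fun j => p (e j) := by
  have hcard : (Finset.univ.map ⟨e, he.injective⟩).card = d + 1 := by simp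
  have heq : e = (Finset.univ.map ⟨e, he.injective⟩).orderEmbOfFin hcard :=
    Finset.orderEmbOfFin_unique hcard (by simp) he
  rw [finsetSign, dif_pos hcard]
  conv_rhs => rw [heq]
  rfl

lemma otSign_eq_ite {q : Fin (d + 1) → Fin d → ℝ} (hq : otSign q ≠ 0) :
    otSign q = if 0 < otSign q then 1 else -1 := by
  rw [otSign_eq_sign_orientDet] at hq ⊢
  rcases Real.sign_apply_eq_of_ne_zero _ (mt Real.sign_eq_zero_iff.2 hq) with h | h <;>
    norm_num [h]

lemma IntervalHomog.orderTypeHomogeneous {a b : Fin n} (h : IntervalHomog d (boolSign p) a b)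
    (hp : GeneralPosition p) {m : ℕ} {e : Fin m → Fin n} (he : StrictMono e)
    (hab : ∀ i, a ≤ e i ∧ e i ≤ b) : OrderTypeHomogeneous fun i => p (e i) := by
  obtain ⟨σ, hσ⟩ := h
  refine ⟨if σ then 1 else -1, by split_ifs <;> norm_num, fun F hF => ?_⟩
  have heF : StrictMono fun j => e (F j) := he.comp hF
  have hcard : (Finset.univ.map ⟨fun j => e (F j), heF.injective⟩).card = d + 1 := by simp
  have hne := hp.finsetSign_ne_zero hcard
  have hsign := hσ _ hcard (by simp [hab])
  rw [boolSign, finsetSign_map heF] at hsign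
  rw [finsetSign_map heF] at hne
  subst hsign
  simpa only [decide_eq_true_eq] using otSign_eq_ite hne

end Blocks

/-- For every integer `d ≥ 2` there exists `M = M(d)` such that every
`(d+1)`-crossing polygonal path `p 0 ⋯ p (n-1)` in general position in `ℝ^d` can be
subdivided into at most `M` convex (`d`-crossing) polygonal paths. -/
theorem subdivision_of_polygonal_paths :
    ∀ d : ℕ, 2 ≤ d → ∃ M : ℕ,
      ∀ (n : ℕ) (p : Fin n → (Fin d → ℝ)), 0 < n →
        GeneralPosition p → PathCrossing (d + 1) p →
        ∃ k : ℕ, k ≤ M ∧ ∃ f : Fin (k + 1) → Fin n,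
          (f 0 : ℕ) = 0 ∧ (f (Fin.last k) : ℕ) = n - 1 ∧ StrictMono f ∧
          ∀ j : Fin k,
            PathCrossing d
              (fun i : Fin ((f j.succ : ℕ) - (f j.castSucc : ℕ) + 1) =>
                p ⟨(f j.castSucc : ℕ) + (i : ℕ), by
                  have h1 := i.isLt
                  have h2 := (f j.succ).isLt
                  have h3 := (f j.castSucc).isLt
                  omega⟩) := by
  intro d hd
  obtain ⟨M, hM⟩ := exists_isCutSet_card_le d
  refine ⟨2 * M + 1, fun n p hn hp hcross => ?_⟩
  obtain ⟨n, rfl⟩ := Nat.exists_eq_succ_of_ne_zero hn.ne'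
  obtain ⟨C, hCcard, hC⟩ := hM _ (boolSign p) (hp.flipSeq_boolSign hcross hd)
  obtain ⟨m, hm, f, h0, hlast, hf, hhom⟩ := hC.exists_subdivision (by lia)
  refine ⟨m, by lia, f, by simp [h0], by simp [hlast], hf, fun j => ?_⟩
  have hle : f j.castSucc ≤ f j.succ := hf.monotone j.castSucc_lt_succ.le
  refine ((hhom j).orderTypeHomogeneous hp (fun i i' hii' => ?_) fun i => ⟨?_, ?_⟩).pathCrossing
  · exact Nat.add_lt_add_left hii' _
  · exact Nat.le_add_right _ _
  · exact Fin.le_def.2 (by dsimp only; lia)
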